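/- Let G be an edge-weighted graph admitting a tree decomposition in which every bag has size at most k. Then for every real ε with 0 < ε ≤ 1 and every real r > 0, G admits an r-cover 𝒟 such that every member of 𝒟 has weak diameter at most (4+ε)·r and the overlap of 𝒟 is at most (2⌈12/ε⌉+k+1)^(3⌈12/ε⌉+4). -/

import Mathlib

open scoped ENNReal

namespace ScatterDim

variable {V : Type}





/-- Total weight of a walk in an edge-weighted graph. -/
noncomputable def walkWeight {G : SimpleGraph V} (w : Sym2 V → ℝ≥0∞)
    {u v : V} (p : G.Walk u v) : ℝ≥0∞ :=
  (p.edges.map w).sum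

/-- Shortest-path metric of an edge-weighted graph: the infimum of the total
weights of walks between the two vertices. -/
noncomputable def gdist (G : SimpleGraph V) (w : Sym2 V → ℝ≥0∞) (u v : V) : ℝ≥0∞ :=
  ⨅ p : G.Walk u v, walkWeight w p

/-- Shortest-path distance measured within the subgraph induced on `S`
(`⊤` if one of the endpoints is not in `S`). -/
noncomputable def distOn (G : SimpleGraph V) (w : Sym2 V → ℝ≥0∞) (S : Set V)
    (u v : V) : ℝ≥0∞ :=
  ⨅ (hu : u ∈ S), ⨅ (hv : v ∈ S), ⨅ (p : (G.induce S).Walk ⟨u, hu⟩ ⟨v, hv⟩),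
    (p.edges.map (fun e => w (e.map Subtype.val))).sum

/-- Distance between two sets of vertices inside the subgraph induced on `S`. -/
noncomputable def setDistOn (G : SimpleGraph V) (w : Sym2 V → ℝ≥0∞) (S : Set V)
    (A B : Set V) : ℝ≥0∞ :=
  ⨅ a ∈ A, ⨅ b ∈ B, distOn G w S a b

/-- Distance from a point to a set. -/
noncomputable def pdist (G : SimpleGraph V) (w : Sym2 V → ℝ≥0∞) (u : V) (X : Set V) : ℝ≥0∞ :=
  ⨅ x ∈ X, gdist G w u x

/-- `Y` is weakly `r`-reachable from `X` (with respect to the partition `P`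
ordered by `le`): there is a path of total weight at most `r` from a vertex of `X`
to a vertex of `Y` in the subgraph induced on the union of the parts `Z` with `Y ⪯ Z`. -/
def WReach (G : SimpleGraph V) (w : Sym2 V → ℝ≥0∞) (P : Set (Set V))
    (le : Set V → Set V → Prop) (r : ℝ) (X Y : Set V) : Prop :=
  setDistOn G w (⋃₀ {Z | Z ∈ P ∧ le Y Z}) X Y ≤ ENNReal.ofReal r

/-- The weak coloring number of `G` with respect to the partition `P`
and the order `le`: the maximum over `X ∈ P` of the number of parts weakly
`r`-reachable from `X`. -/
noncomputable def wcol (G : SimpleGraph V) (w : Sym2 V → ℝ≥0∞) (P : Set (Set V))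
    (le : Set V → Set V → Prop) (r : ℝ) : ℕ :=
  ⨆ X ∈ P, {Y | Y ∈ P ∧ WReach G w P le r X Y}.ncard

/-- `le` is a total (linear) order on the collection `P`. -/
def IsLinearOrderOn {α : Type} (P : Set α) (le : α → α → Prop) : Prop :=
  (∀ X ∈ P, le X X) ∧
  (∀ X ∈ P, ∀ Y ∈ P, le X Y → le Y X → X = Y) ∧
  (∀ X ∈ P, ∀ Y ∈ P, ∀ Z ∈ P, le X Y → le Y Z → le X Z) ∧
  (∀ X ∈ P, ∀ Y ∈ P, le X Y ∨ le Y X)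

/-- An `ε`-ladder of width `r` and length `ℓ` in the metric `dist`. -/
def IsLadder (dist : V → V → ℝ≥0∞) (ε r : ℝ) (ℓ : ℕ) (x p : Fin ℓ → V) : Prop :=
  (∀ i j : Fin ℓ, j < i → dist (p j) (x i) ≤ ENNReal.ofReal r) ∧
  (∀ i : Fin ℓ, ENNReal.ofReal ((1 + ε) * r) < dist (p i) (x i))

/-- `G` contains the complete graph on `h` vertices as a minor, witnessed by
pairwise disjoint connected nonempty branch sets that are pairwise adjacent. -/
def HasCompleteMinor (G : SimpleGraph V) (h : ℕ) : Prop :=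
  ∃ B : Fin h → Set V,
    (∀ i, (G.induce (B i)).Connected) ∧
    (∀ i j, i ≠ j → Disjoint (B i) (B j)) ∧
    (∀ i j, i ≠ j → ∃ u ∈ B i, ∃ v ∈ B j, G.Adj u v)

/-- `(T, bag)` is a tree decomposition of `G`. -/
def IsTreeDecompOf {ι : Type} (G : SimpleGraph V) (T : SimpleGraph ι) (bag : ι → Set V) : Prop :=
  T.IsTree ∧
  (∀ u v : V, G.Adj u v → ∃ t, u ∈ bag t ∧ v ∈ bag t) ∧
  (∀ v : V, (T.induce {t | v ∈ bag t}).Connected)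

/-- `G` has treewidth at most `n`. -/
def TreewidthAtMost (G : SimpleGraph V) (n : ℕ) : Prop :=
  ∃ (ι : Type) (T : SimpleGraph ι) (bag : ι → Set V),
    IsTreeDecompOf G T bag ∧ ∀ t, (bag t).ncard ≤ n + 1

/-- `D` is an `r`-cover of the edge-weighted graph `(G, w)`. -/
def IsCover (G : SimpleGraph V) (w : Sym2 V → ℝ≥0∞) (r : ℝ) (D : Set (Set V)) : Prop :=
  ∀ v : V, ∃ A ∈ D, ∀ u : V, gdist G w v u ≤ ENNReal.ofReal r → u ∈ A



section Helpers

theorem walkWeight_nil {G : SimpleGraph V} (w : Sym2 V → ℝ≥0∞) (u : V) :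
    walkWeight w (SimpleGraph.Walk.nil : G.Walk u u) = 0 := by
  simp [walkWeight]

theorem walkWeight_cons {G : SimpleGraph V} (w : Sym2 V → ℝ≥0∞) {u v x : V} (h : G.Adj u v)
    (p : G.Walk v x) :
    walkWeight w (SimpleGraph.Walk.cons h p) = w s(u, v) + walkWeight w p := by
  simp [walkWeight]

theorem walkWeight_append {G : SimpleGraph V} (w : Sym2 V → ℝ≥0∞) {u v x : V} (p : G.Walk u v)
    (q : G.Walk v x) :
    walkWeight w (p.append q) = walkWeight w p + walkWeight w q := by
  simp [walkWeight, SimpleGraph.Walk.edges_append]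

theorem walkWeight_reverse {G : SimpleGraph V} (w : Sym2 V → ℝ≥0∞) {u v : V} (p : G.Walk u v) :
    walkWeight w p.reverse = walkWeight w p := by
  simp [walkWeight, SimpleGraph.Walk.edges_reverse, List.sum_reverse]

/-- `c` is reached from `y` by a walk inside `E` of weight at most `ρ`. -/
def Rch (G : SimpleGraph V) (w : Sym2 V → ℝ≥0∞) (E : Set V) (y c : V) (ρ : ℝ≥0∞) : Prop :=
  ∃ p : G.Walk y c, (∀ x ∈ p.support, x ∈ E) ∧ walkWeight w p ≤ ρ

theorem Rch.refl {G : SimpleGraph V} {w : Sym2 V → ℝ≥0∞} {E : Set V} {y : V} (h : y ∈ E)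
    (ρ : ℝ≥0∞) : Rch G w E y y ρ :=
  ⟨SimpleGraph.Walk.nil, by simpa using h, by simp [walkWeight_nil]⟩

theorem Rch.trans {G : SimpleGraph V} {w : Sym2 V → ℝ≥0∞} {E : Set V} {x y z : V} {a b : ℝ≥0∞}
    (h : Rch G w E x y a) (h' : Rch G w E y z b) : Rch G w E x z (a + b) := by
  obtain ⟨p, hp, hw⟩ := h
  obtain ⟨q, hq, hw2⟩ := h'
  refine ⟨p.append q, ?_, ?_⟩
  · intro v hv
    rcases (SimpleGraph.Walk.mem_support_append_iff _ _).1 hv with h | h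
    · exact hp _ h
    · exact hq _ h
  · rw [walkWeight_append]; exact add_le_add hw hw2

theorem Rch.symm {G : SimpleGraph V} {w : Sym2 V → ℝ≥0∞} {E : Set V} {x y : V} {a : ℝ≥0∞}
    (h : Rch G w E x y a) : Rch G w E y x a := by
  obtain ⟨p, hp, hw⟩ := h
  refine ⟨p.reverse, ?_, ?_⟩
  · intro v hv
    exact hp v (by simpa using hv)
  · rwa [walkWeight_reverse]

theorem Rch.mono {G : SimpleGraph V} {w : Sym2 V → ℝ≥0∞} {E E' : Set V} {x y : V} {a b : ℝ≥0∞}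
    (h : Rch G w E x y a) (hE : E ⊆ E') (hab : a ≤ b) : Rch G w E' x y b := by
  obtain ⟨p, hp, hw⟩ := h
  exact ⟨p, fun v hv => hE (hp v hv), hw.trans hab⟩

theorem Rch.left {G : SimpleGraph V} {w : Sym2 V → ℝ≥0∞} {E : Set V} {x y : V} {a : ℝ≥0∞}
    (h : Rch G w E x y a) : x ∈ E := by
  obtain ⟨p, hp, hw⟩ := h
  exact hp _ p.start_mem_support

theorem Rch.right {G : SimpleGraph V} {w : Sym2 V → ℝ≥0∞} {E : Set V} {x y : V} {a : ℝ≥0∞}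
    (h : Rch G w E x y a) : y ∈ E := h.symm.left

/-- The ordering data of a rooted tree decomposition. -/
structure TOrd {ι : Type} (G : SimpleGraph V) (bag : ι → Set V) where
  le : ι → ι → Prop
  dep : ι → ℕ
  top : V → ι
  refl : ∀ a, le a a
  trans : ∀ {a b c}, le a b → le b c → le a c
  chain : ∀ {q a b}, le q a → le q b → le a b ∨ le b a
  dep_lt : ∀ {n a}, le n a → n ≠ a → dep a < dep n
  cross : ∀ {v q t a}, v ∈ bag q → v ∈ bag t → le q a → ¬ le t a → v ∈ bag a
  top_mem : ∀ v, v ∈ bag (top v)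
  le_top : ∀ {v t}, v ∈ bag t → le t (top v)
  edge : ∀ {u v}, G.Adj u v → ∃ t, u ∈ bag t ∧ v ∈ bag t

variable {ι : Type} {G : SimpleGraph V} {bag : ι → Set V}

theorem TOrd.dep_le (O : TOrd G bag) {n a : ι} (h : O.le n a) : O.dep a ≤ O.dep n := by
  by_cases e : n = a
  · rw [e]
  · exact (O.dep_lt h e).le

theorem TOrd.antisymm (O : TOrd G bag) {n a : ι} (h : O.le n a) (h' : O.le a n) : n = a := by
  by_contra e
  have := O.dep_lt h e
  have := O.dep_le h'
  omega

/-- Vertices appearing below `a`. -/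
def TOrd.sub (O : TOrd G bag) (a : ι) : Set V := {u | ∃ t, O.le t a ∧ u ∈ bag t}

theorem TOrd.sub_mono (O : TOrd G bag) {a b : ι} (h : O.le a b) : O.sub a ⊆ O.sub b := by
  rintro u ⟨t, ht, hu⟩
  exact ⟨t, O.trans ht h, hu⟩

theorem TOrd.bag_sub (O : TOrd G bag) {a : ι} : bag a ⊆ O.sub a :=
  fun _ hu => ⟨a, O.refl a, hu⟩

theorem TOrd.crossing (O : TOrd G bag) (w : Sym2 V → ℝ≥0∞) {a t : ι} {y c : V} (p : G.Walk y c)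
    (hc : c ∈ bag t) (ht : ¬ O.le t a) : ∀ q, y ∈ bag q → O.le q a →
    ∃ y' ∈ bag a, ∃ (p1 : G.Walk y y') (p2 : G.Walk y' c),
      (∀ x ∈ p1.support, x ∈ p.support ∧ x ∈ O.sub a) ∧ (∀ x ∈ p2.support, x ∈ p.support) ∧
      walkWeight w p1 + walkWeight w p2 ≤ walkWeight w p := by
  induction p with
  | nil =>
    intro q hy hq
    have hya := O.cross hy hc hq ht
    exact ⟨_, hya, .nil, .nil, by simpa using O.bag_sub hya, by simp, by simp [walkWeight_nil]⟩
  | @cons y z c h p ih =>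
    intro q hy hq
    by_cases hya : y ∈ bag a
    · exact ⟨_, hya, .nil, .cons h p, by simpa using O.bag_sub hya, by simp,
        by simp [walkWeight_nil]⟩
    obtain ⟨s, hs, hs2⟩ := O.edge h
    have hsa : O.le s a := by
      by_contra hn
      exact hya (O.cross hy hs hq hn)
    obtain ⟨y', hy', p1, p2, h1, h2, h3⟩ := ih hc s hs2 hsa
    refine ⟨y', hy', .cons h p1, p2, ?_, ?_, ?_⟩
    · intro x hx
      rw [SimpleGraph.Walk.support_cons, List.mem_cons] at hx
      rcases hx with rfl | hx
      · exact ⟨by simp, ⟨q, hq, hy⟩⟩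
      · exact ⟨by simp [(h1 x hx).1], (h1 x hx).2⟩
    · intro x hx
      simp [h2 x hx]
    · rw [walkWeight_cons, walkWeight_cons, add_assoc]
      gcongr

theorem exists_kernel (dep : ι → ℕ) (X : Set ι) (R : ι → ι → Prop)
    (hR : ∀ a t, R a t → dep a < dep t) :
    ∃ Sel : Set ι, ∀ t, t ∈ Sel ↔ t ∈ X ∧ ∀ a ∈ Sel, ¬ R a t := by
  classical
  let wf : WellFounded (fun a b : ι => dep a < dep b) := (measure dep).wf
  let f : ι → Prop := wf.fix (fun t ih => t ∈ X ∧ ∀ a, ∀ h : dep a < dep t, ih a h → ¬ R a t)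
  refine ⟨{t | f t}, fun t => ?_⟩
  have : f t = (t ∈ X ∧ ∀ a, ∀ h : dep a < dep t, f a → ¬ R a t) := wf.fix_eq _ t
  show f t ↔ _
  rw [this]
  constructor
  · rintro ⟨h1, h2⟩
    exact ⟨h1, fun a ha hr => h2 a (hR _ _ hr) ha hr⟩
  · rintro ⟨h1, h2⟩
    exact ⟨h1, fun a _ ha hr => h2 a ha hr⟩

/-- The counted cores. -/
def TOrd.cnt (O : TOrd G bag) (w : Sym2 V → ℝ≥0∞) (δ : ℝ≥0∞) (F : Set (V × ι × Set V))
    (s : ℕ) (q : ι) (y : V) : Set (V × ι × Set V) :=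
  {f | f ∈ F ∧ O.le q f.2.1 ∧ Rch G w f.2.2 y f.1 (s * δ)}

def BB (k j s : ℕ) : ℕ := 2 * j * (k + 1) ^ (2 * s + 1)

theorem BB_zero_step {k j : ℕ} (hj : j + 1 ≤ k) : 2 * k + BB k j 0 ≤ BB k (j + 1) 0 := by
  simp only [BB]
  have e : (k + 1) ^ (2 * 0 + 1) = k + 1 := by ring
  rw [e]
  nlinarith

theorem BB_step {k j s : ℕ} (hj : j + 1 ≤ k) :
    2 * k + BB k j (s + 1) + k * BB k (j + 1) s ≤ BB k (j + 1) (s + 1) := by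
  simp only [BB]
  have e : (k + 1) ^ (2 * (s + 1) + 1) = (k + 1) ^ 2 * (k + 1) ^ (2 * s + 1) := by ring
  rw [e]
  have hP : 1 ≤ (k + 1) ^ (2 * s + 1) := Nat.one_le_pow _ _ (by omega)
  generalize (k + 1) ^ (2 * s + 1) = P at *
  have h1 : k * (j + 1) * P ≤ k * k * P := by gcongr
  nlinarith [Nat.zero_le (k * P)]

theorem main_lemma (O : TOrd G bag) (w : Sym2 V → ℝ≥0∞) (δ : ℝ≥0∞) (k : ℕ)
    (hbag : ∀ t, (bag t).encard ≤ k) (j : ℕ) : j ≤ k → ∀ (S : Set V) (X : Set ι),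
    (∀ t ∈ X, (bag t ∩ S).encard ≤ j) →
    ∃ F : Set (V × ι × Set V),
      (∀ f ∈ F, f.2.1 ∈ X ∧ f.1 ∈ bag f.2.1 ∧ f.2.2 ⊆ S ∩ O.sub f.2.1) ∧
      (∀ Z ⊆ S, ∀ t ∈ X, Z ⊆ O.sub t → (bag t ∩ Z).Nonempty →
        ∃ f ∈ F, Z ⊆ f.2.2 ∧ O.le t f.2.1 ∧ ∃ z ∈ Z, Rch G w f.2.2 z f.1 δ) ∧
      (∀ s q y, y ∈ bag q → (O.cnt w δ F s q y).encard ≤ (BB k j s : ℕ)) := by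
  induction j with
  | zero =>
    intro _ S X hX
    refine ⟨∅, by simp, ?_, by simp [TOrd.cnt]⟩
    rintro Z hZ t ht - ⟨z, hz, hz'⟩
    have := hX t ht
    simp only [CharP.cast_eq_zero, nonpos_iff_eq_zero, Set.encard_eq_zero] at this
    have h2 : z ∈ bag t ∩ S := ⟨hz, hZ hz'⟩
    simp [this] at h2
  | succ j ih =>
    intro hj S X hX
    set C : ι → Set V := fun a => {u | ∃ c ∈ bag a ∩ S, Rch G w (S ∩ O.sub a) u c δ} with hC
    have hself : ∀ a, ∀ c ∈ bag a ∩ S, c ∈ C a := fun a c hc =>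
      ⟨c, hc, Rch.refl (show c ∈ S ∩ O.sub a from ⟨hc.2, O.bag_sub hc.1⟩) _⟩
    have hCS : ∀ a, C a ⊆ S := by
      rintro a u ⟨c, hc, hr⟩
      exact hr.left.1
    obtain ⟨Sel, hSel⟩ := exists_kernel O.dep X
      (fun a t => O.le t a ∧ t ≠ a ∧ (bag t ∩ C a).Nonempty)
      (fun a t h => O.dep_lt h.1 h.2.1)
    have hM : ∀ a' ∈ Sel, ∀ a ∈ Sel, O.le a' a → a' ≠ a → ∀ u t, u ∈ bag t → O.le t a' →
        u ∉ C a := by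
      rintro a' ha' a ha hle hne u t hu ht ⟨c, hc, p, hp, hw⟩
      refine ((hSel a').1 ha').2 a ha ⟨hle, hne, ?_⟩
      have hna : ¬ O.le a a' := fun h => hne (O.antisymm hle h)
      obtain ⟨y', hy', p1, p2, h1, h2, h3⟩ := O.crossing w p hc.1 hna t hu ht
      exact ⟨y', hy', c, hc, p2, fun x hx => hp x (h2 x hx), (le_add_self.trans h3).trans hw⟩
    let XX : ι → Set ι := fun a => {t | t ∈ X ∧ O.le t a ∧ (bag t ∩ C a).Nonempty}
    have hIH : ∀ a, ∀ t ∈ XX a, (bag t ∩ (S \ C a)).encard ≤ j := by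
      rintro a t ⟨htX, hta, x, hx, hxC⟩
      have h1 : (bag t ∩ (S \ C a)).encard + 1 ≤ (j : ℕ∞) + 1 := by
        have hn : x ∉ bag t ∩ (S \ C a) := fun h => h.2.2 hxC
        rw [← Set.encard_insert_of_notMem hn]
        refine le_trans (Set.encard_le_encard ?_) (by simpa using hX t htX)
        rintro z (rfl | hz)
        · exact ⟨hx, hCS _ hxC⟩
        · exact ⟨hz.1, hz.2.1⟩
      exact (ENat.add_le_add_iff_right (by simp)).1 h1
    choose FF hF1 hF2 hF3 using fun a => ih (by omega) (S \ C a) (XX a) (hIH a)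
    let lev : ι → Set (V × ι × Set V) := fun a => (fun c => (c, a, S ∩ O.sub a)) '' (bag a ∩ S)
    have hlev : ∀ a, (lev a).encard ≤ k := fun a =>
      (Set.encard_image_le _ _).trans ((Set.encard_le_encard Set.inter_subset_left).trans (hbag a))
    let F : Set (V × ι × Set V) := {f | ∃ a ∈ Sel, f ∈ lev a ∨ f ∈ FF a}
    have hSX : ∀ a ∈ Sel, a ∈ X := fun a ha => ((hSel a).1 ha).1
    have hbasic : ∀ a ∈ Sel, ∀ f, (f ∈ lev a ∨ f ∈ FF a) →
        f.2.1 ∈ XX a ∧ f.1 ∈ bag f.2.1 ∧ f.2.2 ⊆ S ∩ O.sub f.2.1 := by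
      rintro a ha f (⟨c, hc, rfl⟩ | hf)
      · exact ⟨⟨hSX a ha, O.refl a, c, hc.1, hself a c hc⟩, hc.1, subset_rfl⟩
      · obtain ⟨h1, h2, h3⟩ := hF1 a f hf
        exact ⟨h1, h2, fun x hx => ⟨(h3 hx).1.1, (h3 hx).2⟩⟩
    refine ⟨F, ?_, ?_, ?_⟩
    · rintro f ⟨a, ha, hf⟩
      obtain ⟨h1, h2, h3⟩ := hbasic a ha f hf
      exact ⟨h1.1, h2, h3⟩
    · intro Z hZ t ht hZt hne
      have key : ∃ a ∈ Sel, O.le t a ∧ (bag t ∩ C a).Nonempty := by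
        by_cases hts : t ∈ Sel
        · obtain ⟨z, hz, hz'⟩ := hne
          exact ⟨t, hts, O.refl t, z, hz, hself t z ⟨hz, hZ hz'⟩⟩
        · have := (not_congr (hSel t)).1 hts
          push Not at this
          obtain ⟨a, ha, h1, h2, h3⟩ := this ht
          exact ⟨a, ha, h1, h3⟩
      obtain ⟨a, ha, hta, hmeet⟩ := key
      by_cases hZC : (Z ∩ C a).Nonempty
      · obtain ⟨z, hz, c, hc, hr⟩ := hZC
        exact ⟨(c, a, S ∩ O.sub a), ⟨a, ha, Or.inl ⟨c, hc, rfl⟩⟩,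
          fun x hx => ⟨hZ hx, O.sub_mono hta (hZt hx)⟩, hta, z, hz, hr⟩
      · obtain ⟨f, hf, h⟩ := hF2 a Z (fun x hx => ⟨hZ hx, fun hx' => hZC ⟨x, hx, hx'⟩⟩) t
          ⟨ht, hta, hmeet⟩ hZt hne
        exact ⟨f, ⟨a, ha, Or.inr hf⟩, h⟩
    · -- counting
      have hstruct : ∀ s q y, y ∈ bag q → ∃ a₁ a₂, O.cnt w δ F s q y ⊆
          ((lev a₁ ∪ lev a₂) ∪ O.cnt w δ (FF a₂) s q y) ∪
            {f | ∃ s', s = s' + 1 ∧ ∃ y' ∈ bag a₂, f ∈ O.cnt w δ F s' a₂ y'} := by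
        intro s q y hy
        -- the region whose core neighbourhood contains `y`
        obtain ⟨a₁, ha₁⟩ : ∃ a₁, ∀ a ∈ Sel, O.le q a → y ∈ C a → a = a₁ := by
          by_cases h : ∃ a ∈ Sel, O.le q a ∧ y ∈ C a
          · obtain ⟨a₁, h1, h2, h3⟩ := h
            refine ⟨a₁, fun a ha hqa hya => ?_⟩
            by_contra hne
            rcases O.chain hqa h2 with h | h
            · exact hM a ha a₁ h1 h hne y q hy hqa h3
            · exact hM a₁ h1 a ha h (Ne.symm hne) y q hy h2 hya
          · exact ⟨q, fun a ha h1 h2 => (h ⟨a, ha, h1, h2⟩).elim⟩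
        obtain ⟨a₂, ha₂⟩ : ∃ a₂, ∀ a ∈ Sel, O.le q a → y ∉ C a →
            a = a₂ ∨ (a₂ ∈ Sel ∧ O.le q a₂ ∧ y ∉ C a₂ ∧ O.le a₂ a ∧ a₂ ≠ a) := by
          by_cases h : ({a | a ∈ Sel ∧ O.le q a ∧ y ∉ C a} : Set ι).Nonempty
          · obtain ⟨a₂, ⟨h1, h2, h3⟩, hmin⟩ :=
              (measure (fun a => O.dep q - O.dep a)).wf.has_min _ h
            refine ⟨a₂, fun a ha hqa hya => ?_⟩
            by_cases e : a = a₂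
            · exact Or.inl e
            refine Or.inr ⟨h1, h2, h3, ?_, Ne.symm e⟩
            rcases O.chain h2 hqa with h | h
            · exact h
            · exfalso
              refine hmin a ⟨ha, hqa, hya⟩ ?_
              have l1 := O.dep_lt h e
              have l2 := O.dep_le hqa
              show O.dep q - O.dep a < O.dep q - O.dep a₂
              omega
          · exact ⟨q, fun a ha h1 h2 => (h ⟨a, ha, h1, h2⟩).elim⟩
        refine ⟨a₁, a₂, ?_⟩
        rintro f ⟨⟨a, ha, hf⟩, hqf, hr⟩
        obtain ⟨⟨hfX, hfa, u, hu, huC⟩, hcb, hE⟩ := hbasic a ha f hf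
        have hqa := O.trans hqf hfa
        by_cases hya : y ∈ C a
        · rcases hf with hf | hf
          · rw [ha₁ a ha hqa hya] at hf
            exact Or.inl (Or.inl (Or.inl hf))
          · exact (((hF1 a f hf).2.2 hr.left).1.2 hya).elim
        rcases ha₂ a ha hqa hya with rfl | ⟨h1, h2, h3, h4, h5⟩
        · rcases hf with hf | hf
          · exact Or.inl (Or.inl (Or.inr hf))
          · exact Or.inl (Or.inr ⟨hf, hqf, hr⟩)
        right
        have hnb : ¬ O.le f.2.1 a₂ := fun h => hM a₂ h1 a ha h4 h5 u f.2.1 hu h huC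
        have hab : O.le a₂ f.2.1 := (O.chain h2 hqf).resolve_right hnb
        obtain ⟨p, hp, hw⟩ := hr
        obtain ⟨y', hy', p1, p2, g1, g2, g3⟩ := O.crossing w p hcb hnb q hy h2
        have hlt : δ < walkWeight w p1 := by
          by_contra hle
          refine h3 ⟨y', ⟨hy', ?_⟩, p1, ?_, not_lt.1 hle⟩
          · exact (hE (hp _ (g1 _ p1.end_mem_support).1)).1
          · intro x hx
            exact ⟨(hE (hp _ (g1 _ hx).1)).1, (g1 _ hx).2⟩
        have hsum := g3.trans hw
        cases s with
        | zero =>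
          exfalso
          have : walkWeight w p1 ≤ 0 := (le_self_add.trans hsum).trans (by simp)
          exact absurd (hlt.trans_le this) (by simp)
        | succ s =>
          refine ⟨s, rfl, y', hy', ⟨a, ha, hf⟩, hab, p2, fun x hx => hp _ (g2 x hx), ?_⟩
          by_contra hcon
          rw [not_le] at hcon
          have := ENNReal.add_lt_add hlt hcon
          refine absurd hsum (not_le.2 (lt_of_eq_of_lt ?_ this))
          push_cast
          ring
      intro s
      induction s with
      | zero =>
        intro q y hy
        obtain ⟨a₁, a₂, hsub⟩ := hstruct 0 q y hy
        have hsub2 : O.cnt w δ F 0 q y ⊆ (lev a₁ ∪ lev a₂) ∪ O.cnt w δ (FF a₂) 0 q y := by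
          intro f hf
          rcases hsub hf with h | ⟨s', hs', -⟩
          · exact h
          · omega
        calc (O.cnt w δ F 0 q y).encard ≤ _ := Set.encard_le_encard hsub2
          _ ≤ (lev a₁).encard + (lev a₂).encard + (O.cnt w δ (FF a₂) 0 q y).encard :=
              (Set.encard_union_le _ _).trans (by gcongr; exact Set.encard_union_le _ _)
          _ ≤ k + k + (BB k j 0 : ℕ) := by
              gcongr
              · exact hlev _
              · exact hlev _
              · exact hF3 a₂ 0 q y hy
          _ ≤ _ := by
              have := BB_zero_step hj
              rw [two_mul] at this
              exact_mod_cast this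
      | succ s ihs =>
        intro q y hy
        obtain ⟨a₁, a₂, hsub⟩ := hstruct (s + 1) q y hy
        have hfin : (bag a₂).Finite := Set.finite_of_encard_le_coe (hbag a₂)
        have hsub2 : O.cnt w δ F (s + 1) q y ⊆ ((lev a₁ ∪ lev a₂) ∪ O.cnt w δ (FF a₂) (s + 1) q y)
            ∪ ⋃ y' ∈ hfin.toFinset, O.cnt w δ F s a₂ y' := by
          intro f hf
          rcases hsub hf with h | ⟨s', hs', y', hy', h⟩
          · exact Or.inl h
          · right
            obtain rfl : s = s' := by omega
            simp only [Set.mem_iUnion]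
            exact ⟨y', by simpa using hy', h⟩
        have hcard : (hfin.toFinset.card : ℕ∞) ≤ k := by
          rw [← Set.encard_coe_eq_coe_finsetCard]; simpa using hbag a₂
        have hU : (⋃ y' ∈ hfin.toFinset, O.cnt w δ F s a₂ y').encard ≤
            (k : ℕ∞) * (BB k (j + 1) s : ℕ) := by
          refine (Finset.set_encard_biUnion_le _ _).trans ?_
          refine (Finset.sum_le_card_nsmul _ _ ((BB k (j + 1) s : ℕ) : ℕ∞) ?_).trans ?_
          · intro y' hy'
            exact ihs a₂ y' (by simpa using hy')
          · rw [nsmul_eq_mul]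
            gcongr
        calc (O.cnt w δ F (s + 1) q y).encard ≤ _ := Set.encard_le_encard hsub2
          _ ≤ (lev a₁).encard + (lev a₂).encard + (O.cnt w δ (FF a₂) (s + 1) q y).encard
              + (⋃ y' ∈ hfin.toFinset, O.cnt w δ F s a₂ y').encard :=
              (Set.encard_union_le _ _).trans (by
                gcongr
                exact (Set.encard_union_le _ _).trans (by gcongr; exact Set.encard_union_le _ _))
          _ ≤ k + k + (BB k j (s + 1) : ℕ) + (k : ℕ∞) * (BB k (j + 1) s : ℕ) := by
              gcongr
              · exact hlev _
              · exact hlev _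
              · exact hF3 a₂ (s + 1) q y hy
          _ ≤ _ := by
              have := BB_step (s := s) hj
              rw [two_mul] at this
              exact_mod_cast this

end Helpers

section TreePart

variable {ι : Type} {G : SimpleGraph V} {bag : ι → Set V} {T : SimpleGraph ι}

def tle (T : SimpleGraph ι) (o : ι) (n a : ι) : Prop := ∀ p : T.Walk o n, a ∈ p.support

theorem tle_refl (o a : ι) : tle T o a a := fun p => p.end_mem_support

theorem tle_trans {o a b c : ι} (h : tle T o a b) (h' : tle T o b c) : tle T o a c := by
  classical
  intro p
  exact p.support_takeUntil_subset_support (h p) (h' (p.takeUntil b (h p)))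

theorem tle_dep (hT : T.Connected) {o n a : ι} (h : tle T o n a) (hne : n ≠ a) :
    T.dist o a < T.dist o n := by
  classical
  obtain ⟨p, hp⟩ := hT.exists_walk_length_eq_dist o n
  rw [← hp]
  exact (SimpleGraph.dist_le _).trans_lt (p.length_takeUntil_lt_length (h p) (Ne.symm hne))

theorem tle_chain (hT : T.Connected) {o q a b : ι} (ha : tle T o q a) (hb : tle T o q b) :
    tle T o a b ∨ tle T o b a := by
  classical
  by_contra hcon
  rw [not_or] at hcon
  obtain ⟨h1, h2⟩ := hcon
  simp only [tle, not_forall] at h1 h2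
  obtain ⟨p1, hp1⟩ := h1
  obtain ⟨p2, hp2⟩ := h2
  obtain ⟨P⟩ := hT.preconnected o q
  obtain ⟨P, hP⟩ := P.toPath
  have hPa := ha P
  set D := P.dropUntil a hPa with hD
  have hDp : D.IsPath := hP.dropUntil hPa
  have hbD : b ∈ D.support := by
    rcases (SimpleGraph.Walk.mem_support_append_iff _ _).1 (hb (p1.append D)) with h | h
    · exact (hp1 h).elim
    · exact h
  have haD : a ∈ (D.dropUntil b hbD).support := by
    rcases (SimpleGraph.Walk.mem_support_append_iff _ _).1 (ha (p2.append (D.dropUntil b hbD)))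
      with h | h
    · exact (hp2 h).elim
    · exact h
  have hne : a ≠ b := by
    rintro rfl
    exact hp1 p1.end_mem_support
  have hsp := D.take_spec hbD
  rw [← hsp] at hDp
  exact hDp.ne_of_mem_support_of_append hne (SimpleGraph.Walk.start_mem_support _) haD rfl

theorem tle_adj {o n n' a : ι} (h : T.Adj n n') (h1 : tle T o n a) (h2 : ¬ tle T o n' a) :
    n = a := by
  simp only [tle, not_forall] at h2
  obtain ⟨p, hp⟩ := h2
  have := h1 (p.concat h.symm)
  rw [SimpleGraph.Walk.support_concat] at this
  simp only [List.mem_append, List.mem_singleton] at this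
  rcases this with h | h
  · exact (hp h).elim
  · exact h.symm

theorem tle_cross {o a : ι} {N : Set ι} {q t : N} (p : (T.induce N).Walk q t)
    (hq : tle T o q a) (ht : ¬ tle T o t a) : a ∈ N := by
  induction p with
  | nil => exact (ht hq).elim
  | @cons x y z h p ih =>
    by_cases hy : tle T o y a
    · exact ih hy ht
    · have := tle_adj (T := T) (by simpa using h) hq hy
      rw [← this]
      exact x.2

theorem tle_top (hT : T.IsTree) {o : ι} {N : Set ι} (hN : (T.induce N).Connected) :
    ∃ m ∈ N, ∀ t ∈ N, tle T o t m := by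
  classical
  obtain ⟨⟨x, hx⟩⟩ := hN.nonempty
  obtain ⟨m, hm, hmin⟩ := (measure (T.dist o)).wf.has_min N ⟨x, hx⟩
  refine ⟨m, hm, fun t ht => ?_⟩
  obtain ⟨p, hp⟩ := hT.connected.exists_walk_length_eq_dist o m
  have hpp : p.IsPath := p.isPath_of_length_eq_dist hp
  obtain ⟨Q⟩ := hN.preconnected ⟨m, hm⟩ ⟨t, ht⟩
  obtain ⟨Q, hQ⟩ := Q.toPath
  let Q' : T.Walk m t := Q.map (SimpleGraph.Embedding.induce N).toHom
  have hQ' : Q'.IsPath := SimpleGraph.Walk.map_isPath_of_injective Subtype.val_injective hQ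
  have hQN : ∀ x ∈ Q'.support, x ∈ N := by
    intro x hx
    have hx2 : x ∈ Q.support.map (SimpleGraph.Embedding.induce (G := T) N).toHom := by
      rw [← SimpleGraph.Walk.support_map]
      exact hx
    obtain ⟨y, -, rfl⟩ := List.mem_map.1 hx2
    exact y.2
  have hpN : ∀ x ∈ p.support, x ∈ N → x = m := by
    intro x hx hxN
    by_contra hne
    refine hmin x hxN ?_
    show T.dist o x < T.dist o m
    rw [← hp]
    exact (SimpleGraph.dist_le _).trans_lt (p.length_takeUntil_lt_length hx hne)
  have hpath : (p.append Q').IsPath := by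
    rw [SimpleGraph.Walk.isPath_def, SimpleGraph.Walk.support_append, List.nodup_append]
    refine ⟨hpp.support_nodup, hQ'.support_nodup.tail, ?_⟩
    rintro x hx y hy rfl
    have hxm := hpN x hx (hQN x (List.mem_of_mem_tail hy))
    subst hxm
    have := hQ'.support_nodup
    rw [SimpleGraph.Walk.support_eq_cons] at this
    exact (List.nodup_cons.1 this).1 hy
  intro W
  have e := hT.isAcyclic.path_unique ⟨_, hpath⟩ W.toPath
  have : m ∈ (W.toPath : T.Walk o t).support := by
    rw [← e]
    exact (SimpleGraph.Walk.mem_support_append_iff _ _).2 (Or.inl p.end_mem_support)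
  exact W.support_toPath_subset_support this

theorem exists_TOrd (htd : IsTreeDecompOf G T bag) : Nonempty (TOrd G bag) := by
  classical
  obtain ⟨hT, he, hc⟩ := htd
  obtain ⟨o⟩ := hT.connected.nonempty
  choose top h1 h2 using fun v => tle_top hT (o := o) (hc v)
  exact ⟨{
    le := tle T o
    dep := T.dist o
    top := top
    refl := tle_refl o
    trans := tle_trans
    chain := tle_chain hT.connected
    dep_lt := tle_dep hT.connected
    cross := by
      intro v q t a hq ht hqa hta
      obtain ⟨p⟩ := (hc v).preconnected ⟨q, hq⟩ ⟨t, ht⟩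
      exact tle_cross (N := {t | v ∈ bag t}) p hqa hta
    top_mem := h1
    le_top := fun {v t} h => h2 v t h
    edge := fun {u v} h => he u v h }⟩

end TreePart

section Final

variable {ι : Type} {G : SimpleGraph V} {bag : ι → Set V}

theorem gdist_le_of_Rch {w : Sym2 V → ℝ≥0∞} {E : Set V} {x y : V} {a : ℝ≥0∞}
    (h : Rch G w E x y a) : gdist G w x y ≤ a := by
  obtain ⟨p, -, hp⟩ := h
  exact (iInf_le _ p).trans hp

theorem prefix_Rch {w : Sym2 V → ℝ≥0∞} {v u : V} (p : G.Walk v u) {R : ℝ≥0∞}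
    (hp : walkWeight w p ≤ R) : Rch G w {x | ∃ q : G.Walk v x, walkWeight w q ≤ R} v u R := by
  classical
  refine ⟨p, ?_, hp⟩
  intro x hx
  refine ⟨p.takeUntil x hx, le_trans ?_ hp⟩
  conv_rhs => rw [← p.take_spec hx]
  rw [walkWeight_append]
  exact le_self_add

theorem TOrd.walk_top (O : TOrd G bag) {Z : Set V} {t : ι}
    (hmin : ∀ z ∈ Z, O.dep t ≤ O.dep (O.top z)) {x y : V} (p : G.Walk x y) :
    (∀ z ∈ p.support, z ∈ Z) → O.le (O.top x) t → O.le (O.top y) t := by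
  induction p with
  | nil => exact fun _ h => h
  | @cons x z y h p ih =>
    intro hp hx
    refine ih (fun a ha => hp a (by simp [ha])) ?_
    obtain ⟨s, hs1, hs2⟩ := O.edge h
    have l1 := O.trans (O.le_top hs1) hx
    have l2 := O.le_top hs2
    rcases O.chain l2 l1 with h | h
    · exact h
    · have hz : z ∈ Z := hp z (by simp)
      by_cases e : t = O.top z
      · rw [← e]; exact O.refl _
      · have := O.dep_lt h e
        have := hmin z hz
        omega

theorem cover_core (O : TOrd G bag) (w : Sym2 V → ℝ≥0∞) (k : ℕ)
    (hbag : ∀ t, (bag t).encard ≤ k) (δ R R' : ℝ≥0∞) (m : ℕ) (hR : R < R')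
    (hm : 2 * R' + δ ≤ m * δ) :
    ∃ D : Set (Set V),
      (∀ v : V, ∃ A ∈ D, ∀ u : V, gdist G w v u ≤ R → u ∈ A) ∧
      (∀ A ∈ D, ∀ u ∈ A, ∀ v ∈ A, gdist G w u v ≤ (2 * R' + δ) + (2 * R' + δ)) ∧
      (∀ v : V, {A | A ∈ D ∧ v ∈ A}.encard ≤ (BB k k m : ℕ)) := by
  obtain ⟨F, h1, h2, h3⟩ := main_lemma O w δ k hbag k le_rfl Set.univ Set.univ
    (fun t _ => by simpa using hbag t)
  let cl : V × ι × Set V → Set V :=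
    fun f => {u | O.le (O.top u) f.2.1 ∧ Rch G w f.2.2 u f.1 (2 * R' + δ)}
  refine ⟨cl '' F, ?_, ?_, ?_⟩
  · intro v
    set Z : Set V := {x | ∃ q : G.Walk v x, walkWeight w q ≤ R'} with hZ
    have hvZ : v ∈ Z := ⟨.nil, by simp [walkWeight_nil]⟩
    obtain ⟨z0, hz0, hmin⟩ := (measure (fun z => O.dep (O.top z))).wf.has_min Z ⟨v, hvZ⟩
    have hmin' : ∀ z ∈ Z, O.dep (O.top z0) ≤ O.dep (O.top z) :=
      fun z hz => not_lt.1 (hmin z hz)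
    have hrv : ∀ z ∈ Z, Rch G w Z v z R' := by
      rintro z ⟨q, hq⟩
      exact prefix_Rch q hq
    have htop : ∀ z ∈ Z, O.le (O.top z) (O.top z0) := by
      intro z hz
      obtain ⟨p, hp, -⟩ := (hrv z0 hz0).symm.trans (hrv z hz)
      exact O.walk_top hmin' p hp (O.refl _)
    obtain ⟨f, hf, hZf, hle, z, hz, hr⟩ := h2 Z (Set.subset_univ _) (O.top z0) (Set.mem_univ _)
      (fun z hz => ⟨O.top z, htop z hz, O.top_mem z⟩) ⟨z0, O.top_mem z0, hz0⟩
    refine ⟨cl f, ⟨f, hf, rfl⟩, fun u hu => ?_⟩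
    have huZ : u ∈ Z := by
      obtain ⟨p, hp⟩ := iInf_lt_iff.1 (hu.trans_lt hR)
      exact ⟨p, hp.le⟩
    refine ⟨O.trans (htop u huZ) hle, ?_⟩
    have := (((hrv u huZ).symm.trans (hrv z hz)).mono hZf le_rfl).trans hr
    rwa [← two_mul] at this
  · rintro A ⟨f, hf, rfl⟩ u hu v hv
    exact gdist_le_of_Rch (hu.2.trans hv.2.symm)
  · intro v
    refine le_trans ?_ (h3 m (O.top v) v (O.top_mem v))
    refine le_trans (Set.encard_le_encard ?_) (Set.encard_image_le cl _)
    rintro A ⟨⟨f, hf, rfl⟩, hv⟩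
    exact ⟨f, ⟨hf, hv.1, hv.2.mono subset_rfl hm⟩, rfl⟩

theorem BB_final (k m : ℕ) : BB k k m ≤ (2 * m + k + 1) ^ (3 * m + 4) := by
  rcases Nat.eq_zero_or_pos k with rfl | hk
  · simp [BB]
  calc BB k k m = 2 * k * (k + 1) ^ (2 * m + 1) := rfl
    _ ≤ (2 * m + k + 1) ^ 2 * (2 * m + k + 1) ^ (2 * m + 1) := by
        gcongr
        · nlinarith [sq_nonneg k, Nat.zero_le (m * k), Nat.zero_le (m ^ 2)]
        · omega
    _ = (2 * m + k + 1) ^ (2 * m + 3) := by ring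
    _ ≤ _ := Nat.pow_le_pow_right (by omega) (by omega)

end Final

theorem stmt_10 {V : Type} [Fintype V] (G : SimpleGraph V) (w : Sym2 V → ℝ≥0∞)
    (k : ℕ) {ι : Type} (T : SimpleGraph ι) (bag : ι → Set V)
    (htd : IsTreeDecompOf G T bag) (hbag : ∀ t, (bag t).ncard ≤ k)
    (ε : ℝ) (hε0 : 0 < ε) (hε1 : ε ≤ 1) (r : ℝ) (hr : 0 < r) :
    ∃ 𝒟 : Set (Set V),
      IsCover G w r 𝒟 ∧
      (∀ A ∈ 𝒟, ∀ u ∈ A, ∀ v ∈ A, gdist G w u v ≤ ENNReal.ofReal ((4 + ε) * r)) ∧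
      (∀ v : V, {A | A ∈ 𝒟 ∧ v ∈ A}.ncard ≤
        (2 * ⌈12 / ε⌉₊ + k + 1) ^ (3 * ⌈12 / ε⌉₊ + 4)) := by
  obtain ⟨O⟩ := exists_TOrd htd
  have hbag' : ∀ t, (bag t).encard ≤ k := by
    intro t
    rw [← (Set.toFinite (bag t)).cast_ncard_eq]
    exact_mod_cast hbag t
  have hεr : 0 < ε * r := mul_pos hε0 hr
  have e1 : 2 * ENNReal.ofReal (r + ε * r / 8) + ENNReal.ofReal (ε * r / 4) =
      ENNReal.ofReal (2 * r + ε * r / 2) := by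
    rw [two_mul, ← ENNReal.ofReal_add (by positivity) (by positivity),
      ← ENNReal.ofReal_add (by positivity) (by positivity)]
    congr 1
    ring
  obtain ⟨D, h1, h2, h3⟩ := cover_core O w k hbag' (ENNReal.ofReal (ε * r / 4))
    (ENNReal.ofReal r) (ENNReal.ofReal (r + ε * r / 8)) ⌈12 / ε⌉₊
    ((ENNReal.ofReal_lt_ofReal_iff (by positivity)).2 (by linarith))
    (by
      rw [e1, ← ENNReal.ofReal_natCast, ← ENNReal.ofReal_mul (by positivity)]
      apply ENNReal.ofReal_le_ofReal
      have hm : 12 / ε ≤ (⌈12 / ε⌉₊ : ℝ) := Nat.le_ceil _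
      have h4 : 12 / ε * (ε * r / 4) ≤ (⌈12 / ε⌉₊ : ℝ) * (ε * r / 4) := by gcongr
      have h5 : 12 / ε * (ε * r / 4) = 3 * r := by field_simp; norm_num
      nlinarith)
  refine ⟨D, h1, ?_, ?_⟩
  · intro A hA u hu v hv
    have := h2 A hA u hu v hv
    rw [e1, ← ENNReal.ofReal_add (by positivity) (by positivity)] at this
    convert this using 2
    ring
  · intro v
    have h := h3 v
    rw [← (Set.toFinite _).cast_ncard_eq] at h
    exact le_trans (by exact_mod_cast h) (BB_final k _)

end ScatterDim
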